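/- Let C be the middle-thirds Cantor set C_{1/3}. Then the set { sin x + cos y : x ∈ C, y ∈ C } contains a nonempty open interval. -/

import Mathlib

/-!
`C_a` is the attractor of the similarities `φ₀ t = a t` and `φ₁ t = a t + (1 - a)`. If `f` and `g`
are increasing with slopes of comparable size, then the four intervals
`f (φᵢ [0, 1]) + g (φⱼ [0, 1])`, in the order `00, 01, 10, 11`, overlap consecutively. Hence every
`z` between `f 0 + g 0` and `f 1 + g 1` also lies between the corresponding values of the pair
`f ∘ φᵢ`, `g ∘ φⱼ` for some `i`, `j`. The slopes of the new pair are those of the old one multiplied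
by `a`, so the step can be repeated; it yields `x`, `y` in `C_a` with `f x + g y` as close to `z` as
desired, and by compactness `z` itself is attained.

For `a = 1/3` this applies to `sin (t / 3)` and `cos (1 - t / 3)`, whose slopes have a ratio between
`1` and `3`; moreover `t / 3` and `1 - t / 3` lie in `C_{1/3}` when `t` does.
-/

open Set MeasureTheory

/-- The middle Cantor set `C_a`, for `0 < a < 1/2`:
`C_a = { (1-a) * ∑ εₖ aᵏ : εₖ ∈ {0,1} }`. -/
noncomputable def middleCantor (a : ℝ) : Set ℝ :=
  {x : ℝ | ∃ ε : ℕ → Bool, x = (1 - a) * ∑' k : ℕ, (if ε k then a ^ k else 0)}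

/-- The arithmetic difference `C_a - l · C_b`. -/
noncomputable def diffSet (a b l : ℝ) : Set ℝ :=
  {z : ℝ | ∃ x ∈ middleCantor a, ∃ y ∈ middleCantor b, z = x - l * y}

open scoped Pointwise

section MiddleCantor

/-- The point of `C_a` with digit sequence `ε`, that is, the coding map from the space of binary
sequences onto `C_a`. -/
noncomputable def cantorPoint (a : ℝ) (ε : ℕ → Bool) : ℝ :=
  (1 - a) * ∑' k : ℕ, if ε k then a ^ k else 0

/-- The two similarities `t ↦ a * t` (for `b = false`) and `t ↦ a * t + (1 - a)` (for `b = true`)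
whose attractor is `C_a`. -/
noncomputable def cantorBranch (a : ℝ) (b : Bool) (t : ℝ) : ℝ :=
  a * t + if b then 1 - a else 0

variable {a x : ℝ}

theorem middleCantor_eq_range_cantorPoint (a : ℝ) : middleCantor a = range (cantorPoint a) :=
  Set.ext fun _ => exists_congr fun _ => eq_comm

theorem norm_ite_pow_le (ha : 0 ≤ a) (p : Prop) [Decidable p] (k : ℕ) :
    ‖if p then a ^ k else 0‖ ≤ a ^ k := by
  split_ifs
  · exact (Real.norm_of_nonneg (pow_nonneg ha k)).le
  · simpa only [norm_zero] using pow_nonneg ha k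

theorem summable_ite_pow (ha : 0 ≤ a) (ha' : a < 1) (ε : ℕ → Bool) :
    Summable fun k => if ε k then a ^ k else 0 :=
  (summable_geometric_of_lt_one ha ha').of_norm_bounded fun k => norm_ite_pow_le ha _ k

theorem continuous_cantorPoint (ha : 0 ≤ a) (ha' : a < 1) : Continuous (cantorPoint a) := by
  refine continuous_const.mul (continuous_tsum (fun k => ?_)
    (summable_geometric_of_lt_one ha ha') fun k ε => norm_ite_pow_le ha _ k)
  exact (continuous_of_discreteTopology (f := fun b : Bool => if b then a ^ k else 0)).comp
    (continuous_apply k)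

theorem cantorPoint_nonneg (ha : 0 ≤ a) (ha' : a < 1) (ε : ℕ → Bool) : 0 ≤ cantorPoint a ε :=
  mul_nonneg (sub_nonneg.2 ha'.le) (tsum_nonneg fun _ => by split_ifs <;> positivity)

theorem cantorPoint_not (ha : 0 ≤ a) (ha' : a < 1) (ε : ℕ → Bool) :
    cantorPoint a (fun k => !ε k) = 1 - cantorPoint a ε := by
  have digits_add (k : ℕ) :
      (if !ε k then a ^ k else 0) + (if ε k then a ^ k else 0) = a ^ k := by
    cases ε k <;> simp
  rw [eq_sub_iff_add_eq, cantorPoint, cantorPoint, ← mul_add,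
    ← (summable_ite_pow ha ha' _).tsum_add (summable_ite_pow ha ha' ε)]
  simp only [digits_add]
  rw [tsum_geometric_of_lt_one ha ha', mul_inv_cancel₀ (sub_pos.2 ha').ne']

theorem cantorPoint_eq_cantorBranch (ha : 0 ≤ a) (ha' : a < 1) (ε : ℕ → Bool) :
    cantorPoint a ε = cantorBranch a (ε 0) (cantorPoint a fun k => ε (k + 1)) := by
  have tail_eq : ∑' k : ℕ, (if ε (k + 1) then a ^ (k + 1) else 0) =
      a * ∑' k : ℕ, if ε (k + 1) then a ^ k else 0 := by
    simp only [← tsum_mul_left, mul_ite, mul_zero, pow_succ']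
  rw [cantorPoint, (summable_ite_pow ha ha' ε).tsum_eq_zero_add, tail_eq, cantorBranch,
    cantorPoint, pow_zero]
  split_ifs <;> ring

theorem isCompact_middleCantor (ha : 0 ≤ a) (ha' : a < 1) : IsCompact (middleCantor a) :=
  middleCantor_eq_range_cantorPoint a ▸ isCompact_range (continuous_cantorPoint ha ha')

theorem zero_mem_middleCantor (a : ℝ) : 0 ∈ middleCantor a :=
  ⟨fun _ => false, by simp⟩

theorem one_sub_mem_middleCantor (ha : 0 ≤ a) (ha' : a < 1) (hx : x ∈ middleCantor a) :
    1 - x ∈ middleCantor a := by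
  obtain ⟨ε, rfl⟩ := hx
  exact ⟨fun k => !ε k, (cantorPoint_not ha ha' ε).symm⟩

theorem cantorBranch_mem_middleCantor (ha : 0 ≤ a) (ha' : a < 1) (b : Bool)
    (hx : x ∈ middleCantor a) : cantorBranch a b x ∈ middleCantor a := by
  obtain ⟨ε, rfl⟩ := hx
  let δ : ℕ → Bool := Nat.rec b fun k _ => ε k
  exact ⟨δ, (cantorPoint_eq_cantorBranch ha ha' δ).symm⟩

theorem middleCantor_subset_Icc (ha : 0 ≤ a) (ha' : a < 1) : middleCantor a ⊆ Icc 0 1 := by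
  rintro _ ⟨ε, rfl⟩
  refine ⟨cantorPoint_nonneg ha ha' ε, sub_nonneg.1 ?_⟩
  exact (cantorPoint_nonneg ha ha' _).trans_eq (cantorPoint_not ha ha' ε)

theorem mapsTo_cantorBranch_Icc (ha : 0 ≤ a) (ha' : a ≤ 1) (b : Bool) :
    MapsTo (cantorBranch a b) (Icc 0 1) (Icc 0 1) := by
  rintro t ⟨ht₀, ht₁⟩
  have h₀ : 0 ≤ a * t := mul_nonneg ha ht₀
  have h₁ : a * t ≤ a := mul_le_of_le_one_right ha ht₁
  cases b <;> constructor <;> simp only [cantorBranch, Bool.false_eq_true, if_true, if_false] <;>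
    linarith

theorem mapsTo_cantorBranch_false_Icc (ha : 0 ≤ a) :
    MapsTo (cantorBranch a false) (Icc 0 1) (Icc 0 a) := by
  rintro t ⟨ht₀, ht₁⟩
  simp only [cantorBranch, Bool.false_eq_true, if_false, add_zero]
  exact ⟨mul_nonneg ha ht₀, mul_le_of_le_one_right ha ht₁⟩

end MiddleCantor

/-- All slopes `(f v - f u) / (v - u)` of `f` between points `u < v` of `s` lie in `[m, M]`. The
condition is written without division, to avoid the junk value at `u = v`. -/
def HasSlopesIn (f : ℝ → ℝ) (m M : ℝ) (s : Set ℝ) : Prop :=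
  ∀ ⦃u⦄, u ∈ s → ∀ ⦃v⦄, v ∈ s → u ≤ v → f v - f u ∈ Icc (m * (v - u)) (M * (v - u))

namespace HasSlopesIn

variable {f : ℝ → ℝ} {m M : ℝ} {s : Set ℝ}

theorem of_deriv_mem_Icc (hs : Convex ℝ s) (hf : ContinuousOn f s)
    (hf' : DifferentiableOn ℝ f (interior s)) (hd : ∀ x ∈ interior s, deriv f x ∈ Icc m M) :
    HasSlopesIn f m M s := fun u hu v hv huv =>
  ⟨hs.mul_sub_le_image_sub_of_le_deriv hf hf' (fun x hx => (hd x hx).1) u hu v hv huv,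
    hs.image_sub_le_mul_sub_of_deriv_le hf hf' (fun x hx => (hd x hx).2) u hu v hv huv⟩

theorem comp_affine {t : Set ℝ} {r c : ℝ} (hf : HasSlopesIn f m M s) (hr : 0 ≤ r)
    (hmaps : MapsTo (fun x => r * x + c) t s) :
    HasSlopesIn (fun x => f (r * x + c)) (r * m) (r * M) t := by
  intro u hu v hv huv
  have h := hf (hmaps hu) (hmaps hv) (add_le_add_left (mul_le_mul_of_nonneg_left huv hr) c)
  rwa [add_sub_add_right_eq_sub, ← mul_sub, ← mul_assoc, ← mul_assoc, mul_comm m,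
    mul_comm M] at h

theorem comp_cantorBranch {t : Set ℝ} {a : ℝ} {b : Bool} (hf : HasSlopesIn f m M s) (ha : 0 ≤ a)
    (hmaps : MapsTo (cantorBranch a b) t s) :
    HasSlopesIn (f ∘ cantorBranch a b) (a * m) (a * M) t :=
  hf.comp_affine ha hmaps

theorem strictMonoOn (hf : HasSlopesIn f m M s) (hm : 0 < m) : StrictMonoOn f s :=
  fun _ hu _ hv huv =>
    sub_pos.1 ((mul_pos hm (sub_pos.2 huv)).trans_le (hf hu hv huv.le).1)

theorem continuousOn (hf : HasSlopesIn f m M s) : ContinuousOn f s := by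
  have lipschitz {u v : ℝ} (hu : u ∈ s) (hv : v ∈ s) (huv : u ≤ v) :
      dist (f u) (f v) ≤ max |m| |M| * dist u v := by
    rw [dist_comm, dist_comm u, Real.dist_eq, Real.dist_eq, abs_of_nonneg (sub_nonneg.2 huv)]
    refine (abs_le_max_abs_abs (hf hu hv huv).1 (hf hu hv huv).2).trans_eq ?_
    rw [abs_mul, abs_mul, abs_of_nonneg (sub_nonneg.2 huv),
      max_mul_of_nonneg _ _ (sub_nonneg.2 huv)]
  refine (LipschitzOnWith.of_dist_le_mul (K := ⟨max |m| |M|, by positivity⟩)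
    fun u hu v hv => ?_).continuousOn
  rcases le_total u v with huv | hvu
  · exact lipschitz hu hv huv
  · rw [dist_comm, dist_comm u]
    exact lipschitz hv hu hvu

end HasSlopesIn

section Sum

variable {a m m' M M' z : ℝ} {f g : ℝ → ℝ}

/-- Here `1 - 2 * a` is the length of the gap between the two copies of `[0, 1]`: by `hgf` the
increment of `g` over the gap is at most that of `f` over one copy, and by `hfg` the increment of
`f` over the gap is at most that of `g` over `[0, 1]`. -/
theorem exists_mem_Icc_cantorBranch (ha : 0 ≤ a) (ha' : a ≤ 1 / 2)
    (hf : HasSlopesIn f m M (Icc 0 1)) (hg : HasSlopesIn g m' M' (Icc 0 1))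
    (hgf : (1 - 2 * a) * M' ≤ a * m) (hfg : (1 - 2 * a) * M ≤ m')
    (hz : z ∈ Icc (f 0 + g 0) (f 1 + g 1)) :
    ∃ b c, z ∈ Icc (f (cantorBranch a b 0) + g (cantorBranch a c 0))
      (f (cantorBranch a b 1) + g (cantorBranch a c 1)) := by
  have mem₀ : (0 : ℝ) ∈ Icc (0 : ℝ) 1 := left_mem_Icc.2 zero_le_one
  have mem₁ : (1 : ℝ) ∈ Icc (0 : ℝ) 1 := right_mem_Icc.2 zero_le_one
  have mem_a : a ∈ Icc (0 : ℝ) 1 := ⟨ha, by linarith⟩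
  have mem_a' : 1 - a ∈ Icc (0 : ℝ) 1 := ⟨by linarith, by linarith⟩
  have gap_f := (hf mem_a mem_a' (by linarith)).2
  have gap_g := (hg mem_a mem_a' (by linarith)).2
  have overlap₁ : f 0 + g (1 - a) ≤ f a + g a := by
    linarith [(hf mem₀ mem_a ha).1]
  have overlap₂ : f (1 - a) + g 0 ≤ f a + g 1 := by
    linarith [(hg mem₀ mem₁ zero_le_one).1]
  have overlap₃ : f (1 - a) + g (1 - a) ≤ f 1 + g a := by
    linarith [(hf mem_a' mem₁ (by linarith)).1]
  simp only [Bool.exists_bool, cantorBranch, mul_zero, mul_one, zero_add, add_zero, if_true,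
    Bool.false_eq_true, if_false, add_sub_cancel]
  rcases le_total z (f a + g a) with h₁ | h₁
  · exact .inl (.inl ⟨hz.1, h₁⟩)
  rcases le_total z (f a + g 1) with h₂ | h₂
  · exact .inl (.inr ⟨overlap₁.trans h₁, h₂⟩)
  rcases le_total z (f 1 + g a) with h₃ | h₃
  · exact .inr (.inl ⟨overlap₂.trans h₂, h₃⟩)
  · exact .inr (.inr ⟨overlap₃.trans h₃, hz.2⟩)

theorem exists_mem_middleCantor_dist_add_le (ha : 0 ≤ a) (ha' : a ≤ 1 / 2)
    (hf : HasSlopesIn f m M (Icc 0 1)) (hg : HasSlopesIn g m' M' (Icc 0 1))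
    (hgf : (1 - 2 * a) * M' ≤ a * m) (hfg : (1 - 2 * a) * M ≤ m')
    (hz : z ∈ Icc (f 0 + g 0) (f 1 + g 1)) (n : ℕ) :
    ∃ x ∈ middleCantor a, ∃ y ∈ middleCantor a, dist z (f x + g y) ≤ (M + M') * a ^ n := by
  induction n generalizing f g m m' M M' with
  | zero =>
    have mem₀ : (0 : ℝ) ∈ Icc (0 : ℝ) 1 := left_mem_Icc.2 zero_le_one
    have mem₁ : (1 : ℝ) ∈ Icc (0 : ℝ) 1 := right_mem_Icc.2 zero_le_one
    refine ⟨0, zero_mem_middleCantor a, 0, zero_mem_middleCantor a, ?_⟩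
    rw [Real.dist_eq, abs_of_nonneg (sub_nonneg.2 hz.1)]
    linarith [hz.2, (hf mem₀ mem₁ zero_le_one).2, (hg mem₀ mem₁ zero_le_one).2]
  | succ n ih =>
    obtain ⟨b, c, hbc⟩ := exists_mem_Icc_cantorBranch ha ha' hf hg hgf hfg hz
    have ha₁ : a < 1 := by linarith
    obtain ⟨x, hx, y, hy, hxy⟩ := ih
      (hf.comp_cantorBranch ha (mapsTo_cantorBranch_Icc ha ha₁.le b))
      (hg.comp_cantorBranch ha (mapsTo_cantorBranch_Icc ha ha₁.le c))
      (by linarith [mul_le_mul_of_nonneg_left hgf ha])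
      (by linarith [mul_le_mul_of_nonneg_left hfg ha]) hbc
    refine ⟨_, cantorBranch_mem_middleCantor ha ha₁ b hx,
      _, cantorBranch_mem_middleCantor ha ha₁ c hy, hxy.trans_eq ?_⟩
    ring

theorem Icc_subset_image_add_image_middleCantor (ha : 0 ≤ a) (ha' : a ≤ 1 / 2)
    (hf : HasSlopesIn f m M (Icc 0 1)) (hg : HasSlopesIn g m' M' (Icc 0 1))
    (hgf : (1 - 2 * a) * M' ≤ a * m) (hfg : (1 - 2 * a) * M ≤ m') :
    Icc (f 0 + g 0) (f 1 + g 1) ⊆ f '' middleCantor a + g '' middleCantor a := by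
  intro z hz
  have ha₁ : a < 1 := by linarith
  have isCompact_image {k : ℝ → ℝ} (hk : ContinuousOn k (Icc 0 1)) :
      IsCompact (k '' middleCantor a) :=
    (isCompact_middleCantor ha ha₁).image_of_continuousOn
      (hk.mono (middleCantor_subset_Icc ha ha₁))
  have isClosed_sum : IsClosed (f '' middleCantor a + g '' middleCantor a) :=
    ((isCompact_image hf.continuousOn).add (isCompact_image hg.continuousOn)).isClosed
  have error_tendsto : Filter.Tendsto (fun n : ℕ => (M + M') * a ^ n) Filter.atTop (nhds 0) := by
    simpa only [mul_zero] using (tendsto_pow_atTop_nhds_zero_of_lt_one ha ha₁).const_mul (M + M')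
  rw [← isClosed_sum.closure_eq, Metric.mem_closure_iff]
  intro δ hδ
  obtain ⟨n, hn⟩ := (error_tendsto.eventually_lt_const hδ).exists
  obtain ⟨x, hx, y, hy, hxy⟩ := exists_mem_middleCantor_dist_add_le ha ha' hf hg hgf hfg hz n
  exact ⟨_, add_mem_add (mem_image_of_mem f hx) (mem_image_of_mem g hy), hxy.trans_lt hn⟩

end Sum

section SinCos

theorem hasSlopesIn_sin : HasSlopesIn Real.sin (17 / 18) 1 (Icc 0 (1 / 3)) := by
  refine .of_deriv_mem_Icc (convex_Icc _ _) Real.continuous_sin.continuousOn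
    Real.differentiable_sin.differentiableOn fun x hx => ?_
  obtain ⟨hx₀, hx₁⟩ := interior_subset hx
  rw [Real.deriv_sin]
  refine ⟨?_, Real.cos_le_one x⟩
  calc (17 / 18 : ℝ) ≤ 1 - x ^ 2 / 2 := by nlinarith
    _ ≤ Real.cos x := Real.one_sub_sq_div_two_le_cos

theorem sin_mem_Icc_of_mem_Icc {x : ℝ} (hx : x ∈ Icc (2 / 3) 1) :
    Real.sin x ∈ Icc (1 / 3) (17 / 18) := by
  obtain ⟨hx₀, hx₁⟩ := hx
  constructor
  · have cube_le : x ^ 3 ≤ x := pow_le_of_le_one (by linarith) hx₁ three_ne_zero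
    linarith [Real.sin_gt_sub_cube (x := x) (by linarith)]
  · have half_le_cos : 1 / 2 ≤ Real.cos x :=
      calc (1 / 2 : ℝ) ≤ 1 - x ^ 2 / 2 := by nlinarith
        _ ≤ Real.cos x := Real.one_sub_sq_div_two_le_cos
    nlinarith [Real.sin_sq_add_cos_sq x]

theorem hasSlopesIn_cos_one_sub :
    HasSlopesIn (fun x => Real.cos (1 - x)) (1 / 3) (17 / 18) (Icc 0 (1 / 3)) := by
  refine .of_deriv_mem_Icc (convex_Icc _ _) (by fun_prop) (by fun_prop) fun x hx => ?_
  obtain ⟨hx₀, hx₁⟩ := interior_subset hx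
  rw [deriv_comp_const_sub, Real.deriv_cos, neg_neg]
  exact sin_mem_Icc_of_mem_Icc ⟨by linarith, by linarith⟩

end SinCos

theorem stmt16 :
    ∃ u v : ℝ, u < v ∧ Set.Ioo u v ⊆
      {z : ℝ | ∃ x ∈ middleCantor (1 / 3), ∃ y ∈ middleCantor (1 / 3),
        z = Real.sin x + Real.cos y} := by
  let φ : ℝ → ℝ := cantorBranch (1 / 3) false
  have mapsTo_φ : MapsTo φ (Icc 0 1) (Icc 0 (1 / 3)) :=
    mapsTo_cantorBranch_false_Icc (by norm_num)
  have mem_φ {t : ℝ} (ht : t ∈ middleCantor (1 / 3)) : φ t ∈ middleCantor (1 / 3) :=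
    cantorBranch_mem_middleCantor (by norm_num) (by norm_num) false ht
  have slopes_sin := hasSlopesIn_sin.comp_cantorBranch (by norm_num) mapsTo_φ
  have slopes_cos := hasSlopesIn_cos_one_sub.comp_cantorBranch (by norm_num) mapsTo_φ
  have mem₀ : (0 : ℝ) ∈ Icc (0 : ℝ) 1 := left_mem_Icc.2 zero_le_one
  have mem₁ : (1 : ℝ) ∈ Icc (0 : ℝ) 1 := right_mem_Icc.2 zero_le_one
  refine ⟨_, _, add_lt_add (slopes_sin.strictMonoOn (by norm_num) mem₀ mem₁ zero_lt_one)
    (slopes_cos.strictMonoOn (by norm_num) mem₀ mem₁ zero_lt_one), fun z hz => ?_⟩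
  obtain ⟨_, ⟨x, hx, rfl⟩, _, ⟨y, hy, rfl⟩, rfl⟩ :=
    Icc_subset_image_add_image_middleCantor (a := 1 / 3) (by norm_num) (by norm_num)
      slopes_sin slopes_cos (by norm_num) (by norm_num) (Ioo_subset_Icc_self hz)
  exact ⟨φ x, mem_φ hx, 1 - φ y,
    one_sub_mem_middleCantor (by norm_num) (by norm_num) (mem_φ hy), rfl⟩
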